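/- arXiv:2004.00086 — 13 statements merged into one kernel-verified Lean document; each statement's English description precedes it below -/
import Mathlib

section
/- Let d ≥ 1 and let γ : [0,1] → ℝ × ℝ^d be a C¹ curve with components γ = (γ₀, x), where x : [0,1] → ℝ^d. If |γ₀′(s)| > ‖x′(s)‖ for every s ∈ [0,1] (Euclidean norm on ℝ^d), then |γ₀(1) − γ₀(0)| > ‖x(1) − x(0)‖. -/
open Set in
/-- Strict mean value inequality: a curve in a real inner product space whose speed is strictly
less than the derivative of `f` moves by strictly less than the increment of `f`. -/
theorem norm_sub_lt_sub_of_norm_deriv_lt {E : Type*} [NormedAddCommGroup E]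
    [InnerProductSpace ℝ E] {f f' : ℝ → ℝ} {x x' : ℝ → E} {a b : ℝ} (hab : a < b)
    (hf : ∀ s ∈ Icc a b, HasDerivWithinAt f (f' s) (Icc a b) s)
    (hx : ∀ s ∈ Icc a b, HasDerivWithinAt x (x' s) (Icc a b) s)
    (hlt : ∀ s ∈ Icc a b, ‖x' s‖ < f' s) :
    ‖x b - x a‖ < f b - f a := by
  set w := x b - x a with hw
  set u : E := ‖w‖⁻¹ • w with hu
  have hu_norm : ‖u‖ ≤ 1 := by
    rw [hu, norm_smul, norm_inv, norm_norm]
    exact inv_mul_le_one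
  have huw : inner ℝ u w = ‖w‖ := by
    rw [hu, real_inner_smul_left, real_inner_self_eq_norm_sq]
    rcases eq_or_ne ‖w‖ 0 with h | h
    · simp [h]
    · field_simp
  have hderiv : ∀ s ∈ Icc a b, HasDerivWithinAt (fun s => f s - inner ℝ u (x s))
      (f' s - inner ℝ u (x' s)) (Icc a b) s := fun s hs =>
    (hf s hs).sub ((innerSL ℝ u).hasFDerivAt.comp_hasDerivWithinAt s (hx s hs))
  have hmono : StrictMonoOn (fun s => f s - inner ℝ u (x s)) (Icc a b) := by
    refine strictMonoOn_of_hasDerivWithinAt_pos (convex_Icc a b)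
      (fun s hs => (hderiv s hs).continuousWithinAt)
      (fun s hs => (hderiv s (interior_subset hs)).mono interior_subset) fun s hs => ?_
    have h_inner : inner ℝ u (x' s) ≤ ‖x' s‖ :=
      (real_inner_le_norm u (x' s)).trans (mul_le_of_le_one_left (norm_nonneg _) hu_norm)
    linarith [hlt s (interior_subset hs)]
  have hends := hmono (left_mem_Icc.2 hab.le) (right_mem_Icc.2 hab.le) hab
  rw [hw, inner_sub_right, ← hw] at huw
  simp only at hends
  linarith

/-- The endpoints of a C¹ timelike curve in `d+1` dimensional Minkowski space are
timelike separated: if `γ = (γ₀, x)` satisfies `|γ₀′(s)| > ‖x′(s)‖` on `[0,1]`,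
then `|γ₀(1) - γ₀(0)| > ‖x(1) - x(0)‖`. -/
theorem timelike_curve_endpoints_timelike_separated
    (d : ℕ) (hd : 1 ≤ d)
    (γ₀ : ℝ → ℝ) (x : ℝ → EuclideanSpace ℝ (Fin d))
    (γ₀' : ℝ → ℝ) (x' : ℝ → EuclideanSpace ℝ (Fin d))
    (hγ₀ : ∀ s ∈ Set.Icc (0 : ℝ) 1, HasDerivWithinAt γ₀ (γ₀' s) (Set.Icc (0 : ℝ) 1) s)
    (hx : ∀ s ∈ Set.Icc (0 : ℝ) 1, HasDerivWithinAt x (x' s) (Set.Icc (0 : ℝ) 1) s)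
    (hγ₀c : ContinuousOn γ₀' (Set.Icc (0 : ℝ) 1))
    (hxc : ContinuousOn x' (Set.Icc (0 : ℝ) 1))
    (htimelike : ∀ s ∈ Set.Icc (0 : ℝ) 1, ‖x' s‖ < |γ₀' s|) :
    ‖x 1 - x 0‖ < |γ₀ 1 - γ₀ 0| := by
  have hne : ∀ s ∈ Set.Icc (0 : ℝ) 1, γ₀' s ≠ 0 := fun s hs =>
    abs_pos.1 ((norm_nonneg _).trans_lt (htimelike s hs))
  rcases hasDerivWithinAt_forall_lt_or_forall_gt_of_forall_ne (convex_Icc 0 1) hγ₀ hne with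
    hneg | hpos
  · have h := norm_sub_lt_sub_of_norm_deriv_lt zero_lt_one (fun s hs => (hγ₀ s hs).neg) hx
      fun s hs => abs_of_neg (hneg s hs) ▸ htimelike s hs
    simp only [Pi.neg_apply] at h
    exact h.trans_le (by linarith [neg_abs_le (γ₀ 1 - γ₀ 0)])
  · have h := norm_sub_lt_sub_of_norm_deriv_lt zero_lt_one hγ₀ hx
      fun s hs => abs_of_pos (hpos s hs) ▸ htimelike s hs
    exact h.trans_le (le_abs_self _)
end

section
/- Let h ∈ (0,1). Define, for T ∈ (−π/2, π/2), χ(T) = π − arcsin(√(h² cos²T + sin²T)) and φ(T) = arctan(tan T / h) + π/2. Then χ and φ are differentiable on (−π/2, π/2) and satisfy sin²(χ(T)) · φ′(T) = h and χ′(T)² + sin²(χ(T)) · φ′(T)² = 1 for every T; in particular χ′(T)² = 1 − h²/sin²(χ(T)). -/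
open Real

/-- The explicit curve `(T, χ(T), φ(T))` with `χ(T) = π - arcsin √(h² cos²T + sin²T)`
and `φ(T) = arctan(tan T / h) + π/2`, for `h ∈ (0,1)`, is a null geodesic of the
compactified 2+1 Minkowski metric `dT² - dχ² - sin²χ dφ²` normalised so `Ṫ = 1`:
it satisfies `sin²χ · φ′ = h` and `χ′² + sin²χ · φ′² = 1`, hence
`χ′² = 1 - h²/sin²χ`. -/
theorem null_geodesic_in_compactified_minkowski (h : ℝ) (hh : h ∈ Set.Ioo (0 : ℝ) 1)
    (χ φ : ℝ → ℝ)
    (hχ : χ = fun T => π - arcsin (Real.sqrt (h ^ 2 * cos T ^ 2 + sin T ^ 2)))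
    (hφ : φ = fun T => arctan (tan T / h) + π / 2) :
    ∀ T ∈ Set.Ioo (-(π / 2)) (π / 2),
      DifferentiableAt ℝ χ T ∧ DifferentiableAt ℝ φ T ∧
      sin (χ T) ^ 2 * deriv φ T = h ∧
      (deriv χ T) ^ 2 + sin (χ T) ^ 2 * (deriv φ T) ^ 2 = 1 ∧
      (deriv χ T) ^ 2 = 1 - h ^ 2 / sin (χ T) ^ 2 := by
  obtain ⟨h0, h1⟩ := hh
  intro T hT
  have hc : 0 < cos T := cos_pos_of_mem_Ioo hT
  have hsc : sin T ^ 2 + cos T ^ 2 = 1 := sin_sq_add_cos_sq T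
  obtain ⟨u, hu⟩ : ∃ u, u = h ^ 2 * cos T ^ 2 + sin T ^ 2 := ⟨_, rfl⟩
  have hu0 : 0 < u := by rw [hu]; positivity
  have h1h : 0 < 1 - h ^ 2 := by nlinarith
  have hu1 : 1 - u = (1 - h ^ 2) * cos T ^ 2 := by rw [hu]; linear_combination -hsc
  have hu1' : 0 < 1 - u := by rw [hu1]; positivity
  have hsq : √u ^ 2 = u := sq_sqrt hu0.le
  have hsu0 : 0 < √u := sqrt_pos.2 hu0
  have hsu1 : √u < 1 := by nlinarith
  have hsin : sin (χ T) ^ 2 = u := by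
    rw [hχ]
    simp only [sin_pi_sub, ← hu]
    rw [sin_arcsin (by linarith) hsu1.le, hsq]
  have hderiv_u : HasDerivAt (fun T => h ^ 2 * cos T ^ 2 + sin T ^ 2)
      (2 * (1 - h ^ 2) * sin T * cos T) T := by
    refine ((((hasDerivAt_cos T).fun_pow 2).const_mul (h ^ 2)).fun_add
      ((hasDerivAt_sin T).fun_pow 2)).congr_deriv ?_
    push_cast
    ring
  have hderiv_χ : HasDerivAt χ
      (-(1 / √(1 - u) * (2 * (1 - h ^ 2) * sin T * cos T / (2 * √u)))) T := by
    have hsqrt := hderiv_u.sqrt (by rw [← hu]; exact hu0.ne')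
    have harcsin : HasDerivAt arcsin (1 / √(1 - u))
        √(h ^ 2 * cos T ^ 2 + sin T ^ 2) := by
      rw [← hu]
      simpa only [hsq] using hasDerivAt_arcsin (x := √u) (by linarith) hsu1.ne
    rw [← hu] at hsqrt
    rw [hχ]
    exact (harcsin.comp T hsqrt).const_sub π
  have hderiv_φ : HasDerivAt φ (h / u) T := by
    rw [hφ]
    refine ((((hasDerivAt_tan hc.ne').div_const h).arctan).add_const (π / 2)).congr_deriv ?_
    rw [tan_eq_sin_div_cos, hu]
    field_simp
  have hχ_sq : deriv χ T ^ 2 = 1 - h ^ 2 / u := by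
    rw [hderiv_χ.deriv, neg_sq, mul_pow, div_pow, div_pow, mul_pow 2 √u, hsq,
      sq_sqrt hu1'.le, hu1]
    field_simp
    rw [hu]
    linear_combination -h ^ 2 * hsc
  refine ⟨hderiv_χ.differentiableAt, hderiv_φ.differentiableAt, ?_, ?_, ?_⟩
  · rw [hsin, hderiv_φ.deriv]
    field_simp
  · rw [hχ_sq, hsin, hderiv_φ.deriv]
    field_simp
    ring
  · rw [hχ_sq, hsin]
end

section
/- Let χ* ∈ (π/2, π) and φ* ∈ (0, π), and set h = sin χ* / √(1 + cos²χ* · tan²(φ* − π/2)). Then h ∈ (0, 1), and there exists T ∈ (−π/2, π/2) such that the curve of the previous statement passes through (χ*, φ*): namely π − arcsin(√(h² cos²T + sin²T)) = χ* and arctan(tan T / h) + π/2 = φ*. -/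
open Real

/-- Targeting step in the proof of Proposition 3.4: for any target point
`(χ*, φ*)` with `χ* ∈ (π/2, π)` and `φ* ∈ (0, π)`, the choice
`h = sin χ* / √(1 + cos²χ* · tan²(φ* - π/2))` satisfies `h ∈ (0,1)` and the null
geodesic `χ(T) = π - arcsin √(h² cos²T + sin²T)`, `φ(T) = arctan(tan T / h) + π/2`
passes through `(χ*, φ*)`. -/
theorem null_geodesic_reaches_target (χs φs : ℝ)
    (hχs : χs ∈ Set.Ioo (π / 2) π) (hφs : φs ∈ Set.Ioo (0 : ℝ) π)
    (h : ℝ)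
    (hhdef : h = sin χs / Real.sqrt (1 + cos χs ^ 2 * tan (φs - π / 2) ^ 2)) :
    h ∈ Set.Ioo (0 : ℝ) 1 ∧
    ∃ T ∈ Set.Ioo (-(π / 2)) (π / 2),
      π - arcsin (Real.sqrt (h ^ 2 * cos T ^ 2 + sin T ^ 2)) = χs ∧
      arctan (tan T / h) + π / 2 = φs := by
  obtain ⟨hχ₁, hχ₂⟩ := hχs
  obtain ⟨hφ₁, hφ₂⟩ := hφs
  have hsin : 0 < sin χs := sin_pos_of_pos_of_lt_pi (by linarith [pi_pos]) hχ₂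
  have hcos : cos χs < 0 := cos_neg_of_pi_div_two_lt_of_lt hχ₁ (by linarith [pi_pos])
  have htan : arctan (tan (φs - π / 2)) = φs - π / 2 :=
    arctan_tan (by linarith) (by linarith)
  set t := tan (φs - π / 2)
  have hone : 1 ≤ 1 + cos χs ^ 2 * t ^ 2 := le_add_of_nonneg_right (by positivity)
  have hsqrt : 1 ≤ √(1 + cos χs ^ 2 * t ^ 2) := one_le_sqrt.mpr hone
  have hsin_lt : sin χs < 1 := by nlinarith [sin_sq_add_cos_sq χs, sq_pos_of_neg hcos]
  have hpos : 0 < h := hhdef ▸ by positivity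
  have hlt : h < 1 := by
    rw [hhdef, div_lt_one (by positivity)]
    linarith
  have hsq : h ^ 2 = sin χs ^ 2 / (1 + cos χs ^ 2 * t ^ 2) := by
    rw [hhdef, div_pow, sq_sqrt (by positivity)]
  refine ⟨⟨hpos, hlt⟩, arctan (h * t), arctan_mem_Ioo _, ?_, ?_⟩
  · have hval : h ^ 2 * cos (arctan (h * t)) ^ 2 + sin (arctan (h * t)) ^ 2 = sin χs ^ 2 := by
      have hmul : h ^ 2 * (1 + cos χs ^ 2 * t ^ 2) = sin χs ^ 2 := by
        rw [hsq, div_mul_cancel₀ _ (by positivity)]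
      rw [sin_sq (arctan (h * t)), cos_sq_arctan]
      field_simp
      linear_combination hmul - h ^ 2 * t ^ 2 * sin_sq_add_cos_sq χs
    rw [hval, sqrt_sq hsin.le, ← sin_pi_sub,
      arcsin_sin (by linarith [pi_pos]) (by linarith)]
    ring
  · rw [tan_arctan, mul_div_cancel_left₀ _ hpos.ne', htan]
    ring
end

section
/- Let r_s > 0 and R > 3r_s/2, and set h = R/√(1 − r_s/R). Then for every r > R one has 1 − (1 − r_s/r)h²/r² > 0, and the (possibly infinite) integral satisfies 2h ∫_R^∞ dr / (r² √(1 − (1 − r_s/r)h²/r²)) ≥ π/√(1 − r_s/R) > π. -/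
open Real

/-- The squared radial velocity of a null ray with closest approach `R` outside the photon sphere
is positive beyond `R`. -/
theorem schwarzschild_radial_velocity_sq_pos {r_s R r : ℝ} (hrs : 0 < r_s)
    (hR : 3 * r_s / 2 < R) (hr : R < r) :
    0 < 1 - (1 - r_s / r) * (R ^ 2 / (1 - r_s / R)) / r ^ 2 := by
  have hR0 : 0 < R := by linarith
  have hr0 : 0 < r := by linarith
  have hRs : 0 < R - r_s := by linarith
  have key : 0 < (R - r_s) * r ^ 3 - (r - r_s) * R ^ 3 := by
    have hfactor : 0 < R * r * (r + R) - r_s * (r ^ 2 + r * R + R ^ 2) := by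
      have h₁ : 0 < (2 * R / 3 - r_s) * (r ^ 2 + r * R + R ^ 2) :=
        mul_pos (by linarith) (by positivity)
      have h₂ : 0 < R / 3 * ((r - R) * (r + 2 * R)) :=
        mul_pos (by positivity) (mul_pos (by linarith) (by positivity))
      linarith
    linarith [mul_pos (sub_pos.2 hr) hfactor]
  have heq : 1 - (1 - r_s / r) * (R ^ 2 / (1 - r_s / R)) / r ^ 2 =
      ((R - r_s) * r ^ 3 - (r - r_s) * R ^ 3) / ((R - r_s) * r ^ 3) := by
    have : 1 - r_s / R = (R - r_s) / R := by field_simp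
    rw [this]
    field_simp
  rw [heq]
  positivity

/-- The squared radial velocity in positive-mass Schwarzschild is at most the one in flat space
with the same closest approach. -/
theorem schwarzschild_radial_velocity_sq_le {r_s R r : ℝ} (hrs : 0 < r_s)
    (hR : r_s < R) (hr : R < r) :
    1 - (1 - r_s / r) * (R ^ 2 / (1 - r_s / R)) / r ^ 2 ≤ 1 - (R / r) ^ 2 := by
  have hR0 : 0 < R := by linarith
  have hV : 0 < 1 - r_s / R := by rw [sub_pos, div_lt_one hR0]; exact hR
  have hle : 1 - r_s / R ≤ 1 - r_s / r := by gcongr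
  have hone : 1 ≤ (1 - r_s / r) / (1 - r_s / R) := (one_le_div hV).2 hle
  have heq : (1 - r_s / r) * (R ^ 2 / (1 - r_s / R)) / r ^ 2 =
      (1 - r_s / r) / (1 - r_s / R) * (R / r) ^ 2 := by ring
  rw [heq]
  linarith [le_mul_of_one_le_left (sq_nonneg (R / r)) hone]

/-- Half the angle swept out by a straight line at distance `R` from the origin. -/
theorem lintegral_Ioi_one_div_sq_mul_sqrt {R : ℝ} (hR : 0 < R) :
    ∫⁻ r in Set.Ioi R, ENNReal.ofReal (1 / (r ^ 2 * √(1 - (R / r) ^ 2))) =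
      ENNReal.ofReal (π / (2 * R)) := by
  have hcont : ContinuousWithinAt (fun r => -(arcsin (R / r) / R)) (Set.Ici R) R := by
    have : ContinuousAt (fun r => R / r) R := continuousAt_const.div continuousAt_id hR.ne'
    exact ((continuous_arcsin.continuousAt.comp this).div_const R).neg.continuousWithinAt
  have hderiv : ∀ r ∈ Set.Ioi R, HasDerivAt (fun r => -(arcsin (R / r) / R))
      (1 / (r ^ 2 * √(1 - (R / r) ^ 2))) r := by
    intro r hr
    have hr0 : 0 < r := hR.trans hr
    have hlt : R / r < 1 := (div_lt_one hr0).2 hr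
    have hpos : 0 < R / r := by positivity
    have hdiv : HasDerivAt (fun r => R / r) (-R / r ^ 2) r := by
      simpa using (hasDerivAt_const r R).fun_div (hasDerivAt_id r) hr0.ne'
    have := (((hasDerivAt_arcsin (by linarith) hlt.ne).comp r hdiv).div_const R).neg
    refine this.congr_deriv ?_
    have hs : 0 < √(1 - (R / r) ^ 2) := sqrt_pos.2 (by nlinarith)
    generalize √(1 - (R / r) ^ 2) = s at hs
    field_simp
  have hnonneg : ∀ r ∈ Set.Ioi R, 0 ≤ 1 / (r ^ 2 * √(1 - (R / r) ^ 2)) :=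
    fun r _ => by positivity
  have hlim : Filter.Tendsto (fun r => -(arcsin (R / r) / R)) Filter.atTop (nhds 0) := by
    have h₀ : Filter.Tendsto (fun r => R / r) Filter.atTop (nhds 0) :=
      Filter.tendsto_id.const_div_atTop R
    simpa using (((continuous_arcsin.tendsto 0).comp h₀).div_const R).neg
  rw [← MeasureTheory.ofReal_integral_eq_lintegral_ofReal
      (MeasureTheory.integrableOn_Ioi_deriv_of_nonneg hcont hderiv hnonneg hlim)
      ((MeasureTheory.ae_restrict_mem measurableSet_Ioi).mono hnonneg),
    MeasureTheory.integral_Ioi_of_hasDerivAt_of_nonneg hcont hderiv hnonneg hlim,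
    div_self hR.ne', arcsin_one]
  congr 1
  field_simp
  ring

/-- Equation (22): the total angular change along an equatorial null geodesic with
impact parameter `R > 3r_s/2` in positive-mass Schwarzschild (3+1 dimensions),
with `h = R/√(1 - r_s/R)`, satisfies
`2h ∫_R^∞ dr/(r² √(1 - (1 - r_s/r) h²/r²)) ≥ π/√(1 - r_s/R) > π`;
moreover the expression under the square root is positive for `r > R`. -/
theorem schwarzschild_angular_change_ge_pi (r_s R h : ℝ)
    (hrs : 0 < r_s) (hR : 3 * r_s / 2 < R)
    (hh : h = R / Real.sqrt (1 - r_s / R)) :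
    (∀ r > R, 0 < 1 - (1 - r_s / r) * h ^ 2 / r ^ 2) ∧
    ENNReal.ofReal (π / Real.sqrt (1 - r_s / R)) ≤
      ENNReal.ofReal (2 * h) *
        ∫⁻ r in Set.Ioi R,
          ENNReal.ofReal (1 / (r ^ 2 * Real.sqrt (1 - (1 - r_s / r) * h ^ 2 / r ^ 2))) ∧
    π < π / Real.sqrt (1 - r_s / R) := by
  have hR0 : 0 < R := by linarith
  have hV : 0 < 1 - r_s / R := by rw [sub_pos, div_lt_one hR0]; linarith
  have hV1 : 1 - r_s / R < 1 := by linarith [div_pos hrs hR0]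
  have hs : 0 < √(1 - r_s / R) := sqrt_pos.2 hV
  have hsq : h ^ 2 = R ^ 2 / (1 - r_s / R) := by rw [hh, div_pow, sq_sqrt hV.le]
  have hpos : ∀ r > R, 0 < 1 - (1 - r_s / r) * h ^ 2 / r ^ 2 := fun r hr => by
    rw [hsq]; exact schwarzschild_radial_velocity_sq_pos hrs hR hr
  refine ⟨hpos, ?_, ?_⟩
  · have hh0 : 0 ≤ 2 * h := by rw [hh]; positivity
    have hflat : π / √(1 - r_s / R) = 2 * h * (π / (2 * R)) := by rw [hh]; field_simp
    rw [hflat, ENNReal.ofReal_mul hh0, ← lintegral_Ioi_one_div_sq_mul_sqrt hR0]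
    refine mul_le_mul_right (MeasureTheory.setLIntegral_mono' measurableSet_Ioi
      fun r (hr : R < r) => ENNReal.ofReal_le_ofReal ?_) _
    have hr0 : 0 < r := hR0.trans hr
    have hsqrt := sqrt_pos.2 (hpos r hr)
    have hle : 1 - (1 - r_s / r) * h ^ 2 / r ^ 2 ≤ 1 - (R / r) ^ 2 := by
      rw [hsq]; exact schwarzschild_radial_velocity_sq_le hrs (by linarith) hr
    gcongr
  · rw [lt_div_iff₀ hs]
    exact mul_lt_of_lt_one_right pi_pos ((sqrt_lt' one_pos).2 (by simpa using hV1))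
end

section
/- Let r_s > 0 and V(r) = 1 − r_s/r. For R > 3r_s/2 set h(R) = R/√(1 − r_s/R) and, for r > R, ṙ(r, R) = √(1 − V(r) h(R)²/r²). Then the function u_*(R) = −R − r_s log(R/r_s − 1) + ∫_R^∞ (1 − ṙ(r, R)) / (V(r) ṙ(r, R)) dr tends to −∞ as R → ∞. -/
open Real

section FlatIntegral

open MeasureTheory Set Filter Topology

/-- The Minkowski integrand `1/√(1 - R²/r²) - 1` has antiderivative `√(r² - R²) - r`. -/
lemma hasDerivAt_sqrt_sq_sub_sq_sub_self {R r : ℝ} (hR : 0 < R) (hr : R < r) :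
    HasDerivAt (fun r => √(r ^ 2 - R ^ 2) - r) (r / √(r ^ 2 - R ^ 2) - 1) r := by
  have hpos : 0 < r ^ 2 - R ^ 2 := by nlinarith
  have h := (((hasDerivAt_pow 2 r).sub_const (R ^ 2)).sqrt hpos.ne').sub (hasDerivAt_id' r)
  refine h.congr_deriv ?_
  push_cast
  field_simp

lemma div_sqrt_sq_sub_sq_sub_one_nonneg {R r : ℝ} (hR : 0 < R) (hr : R < r) :
    0 ≤ r / √(r ^ 2 - R ^ 2) - 1 := by
  have hpos : 0 < r ^ 2 - R ^ 2 := by nlinarith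
  rw [sub_nonneg, one_le_div (sqrt_pos.2 hpos)]
  exact sqrt_le_iff.2 ⟨by linarith, by nlinarith⟩

lemma tendsto_sqrt_sq_sub_sq_sub_self {R : ℝ} (hR : 0 < R) :
    Tendsto (fun r => √(r ^ 2 - R ^ 2) - r) atTop (𝓝 0) := by
  have hlow : Tendsto (fun r : ℝ => -(R ^ 2 / r)) atTop (𝓝 0) := by
    simpa using (tendsto_const_nhds (x := R ^ 2)).div_atTop tendsto_id |>.neg
  refine tendsto_of_tendsto_of_tendsto_of_le_of_le' hlow tendsto_const_nhds ?_ ?_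
  · filter_upwards [eventually_gt_atTop R] with r hr
    have hr0 : 0 < r := hR.trans hr
    have hle : r - R ^ 2 / r ≤ √(r ^ 2 - R ^ 2) := by
      apply le_sqrt_of_sq_le
      have hdiv : R ^ 2 / r * r = R ^ 2 := by field_simp
      have hdiv_le : R ^ 2 / r ≤ r := by rw [div_le_iff₀ hr0]; nlinarith
      have hdiv_pos : 0 < R ^ 2 / r := by positivity
      nlinarith
    linarith
  · filter_upwards [eventually_gt_atTop R] with r hr
    have : √(r ^ 2 - R ^ 2) ≤ r := sqrt_le_iff.2 ⟨by linarith, by nlinarith⟩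
    linarith

lemma continuousWithinAt_sqrt_sq_sub_sq_sub_self (R : ℝ) :
    ContinuousWithinAt (fun r => √(r ^ 2 - R ^ 2) - r) (Ici R) R :=
  Continuous.continuousWithinAt (by fun_prop)

lemma integrableOn_div_sqrt_sq_sub_sq_sub_one {R : ℝ} (hR : 0 < R) :
    IntegrableOn (fun r => r / √(r ^ 2 - R ^ 2) - 1) (Ioi R) :=
  integrableOn_Ioi_deriv_of_nonneg (continuousWithinAt_sqrt_sq_sub_sq_sub_self R)
    (fun _ hr => hasDerivAt_sqrt_sq_sub_sq_sub_self hR hr)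
    (fun _ hr => div_sqrt_sq_sub_sq_sub_one_nonneg hR hr) (tendsto_sqrt_sq_sub_sq_sub_self hR)

lemma integral_div_sqrt_sq_sub_sq_sub_one {R : ℝ} (hR : 0 < R) :
    ∫ r in Ioi R, (r / √(r ^ 2 - R ^ 2) - 1) = R := by
  rw [integral_Ioi_of_hasDerivAt_of_nonneg (continuousWithinAt_sqrt_sq_sub_sq_sub_self R)
    (fun _ hr => hasDerivAt_sqrt_sq_sub_sq_sub_self hR hr)
    (fun _ hr => div_sqrt_sq_sub_sq_sub_one_nonneg hR hr) (tendsto_sqrt_sq_sub_sq_sub_self hR)]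
  simp

end FlatIntegral

/-- Comparison of `(1 - q) / (V q)` with `(1 - p) / p` when `1 - q² = V (1 - p²) / W` and
`q² ≥ k p²`. -/
lemma one_sub_div_le_of_sq_le {V W k p q : ℝ} (hV : 0 < V) (hW : 0 < W) (hk : 0 < k)
    (hk1 : k ≤ 1) (hp : 0 < p) (hp1 : p < 1) (hq : 0 < q)
    (hVW : W * (1 - q ^ 2) = V * (1 - p ^ 2)) (hqp : k * p ^ 2 ≤ q ^ 2) :
    (1 - q) / (V * q) ≤ 1 / (W * k) * ((1 - p) / p) := by
  have hkp : k * p ≤ q := by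
    apply le_of_sq_le_sq _ hq.le
    nlinarith [mul_nonneg hk.le (mul_nonneg (sub_nonneg.2 hk1) (sq_nonneg p))]
  have hflat : (1 - p) / p = (1 - p ^ 2) / (p * (1 + p)) := by field_simp; ring
  have hcurved : (1 - q) / (V * q) = (1 - p ^ 2) / (W * (q * (1 + q))) := by
    rw [div_eq_div_iff (by positivity) (by positivity)]
    linear_combination q * hVW
  have hnum : 0 ≤ 1 - p ^ 2 := by nlinarith
  rw [hflat, hcurved, div_mul_div_comm, one_mul]
  apply div_le_div_of_nonneg_left hnum (by positivity)
  rw [mul_assoc]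
  apply mul_le_mul_of_nonneg_left _ hW.le
  nlinarith

/-- The Schwarzschild integrand `du/dr` is nonnegative and, up to the factor
`(1 - 3 r_s / (2 R))⁻¹`, bounded by the Minkowski one. -/
lemma schwarzschild_integrand_bounds {s R r : ℝ} (hs : 0 < s) (hR : 3 * s ≤ R) (hr : R < r) :
    0 ≤ (1 - √(1 - (1 - s / r) * (R / √(1 - s / R)) ^ 2 / r ^ 2)) /
        ((1 - s / r) * √(1 - (1 - s / r) * (R / √(1 - s / R)) ^ 2 / r ^ 2)) ∧
      (1 - √(1 - (1 - s / r) * (R / √(1 - s / R)) ^ 2 / r ^ 2)) /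
        ((1 - s / r) * √(1 - (1 - s / r) * (R / √(1 - s / R)) ^ 2 / r ^ 2)) ≤
      1 / (1 - 3 * s / (2 * R)) * (r / √(r ^ 2 - R ^ 2) - 1) := by
  have hR0 : 0 < R := by linarith
  have hr0 : 0 < r := by linarith
  have hV : 0 < 1 - s / r := by rw [sub_pos, div_lt_one hr0]; linarith
  have hW : 0 < 1 - s / R := by rw [sub_pos, div_lt_one hR0]; linarith
  have hc : 0 < 1 - 3 * s / (2 * R) := by rw [sub_pos, div_lt_one (by positivity)]; linarith
  have hwpos : 0 < r ^ 2 - R ^ 2 := by nlinarith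
  have hw : 0 < √(r ^ 2 - R ^ 2) := sqrt_pos.2 hwpos
  have hwr : √(r ^ 2 - R ^ 2) < r := (sqrt_lt' hr0).2 (by nlinarith)
  have hpsq : (√(r ^ 2 - R ^ 2) / r) ^ 2 = 1 - R ^ 2 / r ^ 2 := by
    rw [div_pow, sq_sqrt hwpos.le]; field_simp
  rw [div_pow R, sq_sqrt hW.le]
  set Q := 1 - (1 - s / r) * (R ^ 2 / (1 - s / R)) / r ^ 2 with hQ
  have hWQ : (1 - s / R) * (1 - Q) = (1 - s / r) * (R ^ 2 / r ^ 2) := by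
    rw [hQ, sub_sub_cancel, mul_div_assoc', mul_left_comm, mul_div_cancel₀ _ hW.ne', mul_div_assoc]
  have hQ1 : Q ≤ 1 := by
    rw [hQ, sub_le_self_iff]
    positivity
  have hcubic : (1 - 3 * s / (2 * R)) * (1 - R ^ 2 / r ^ 2) ≤ (1 - s / R) * Q := by
    have hx0 : 0 < R / r := by positivity
    have hx1 : R / r < 1 := (div_lt_one hr0).2 hr
    have he : 0 < s / R := by positivity
    have hsr : s / r = s / R * (R / r) := by field_simp
    have h32 : 3 * s / (2 * R) = 3 / 2 * (s / R) := by field_simp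
    rw [hsr, ← div_pow] at hWQ
    rw [h32, ← div_pow]
    generalize R / r = x at *
    generalize s / R = e at *
    nlinarith [mul_nonneg he.le (mul_nonneg (sq_nonneg (1 - x)) (by linarith : 0 ≤ 1 + 2 * x))]
  have hx : 0 < 1 - R ^ 2 / r ^ 2 := by rw [← hpsq]; positivity
  have hQ0 : 0 < Q := pos_of_mul_pos_right (lt_of_lt_of_le (mul_pos hc hx) hcubic) hW.le
  have hq : 0 < √Q := sqrt_pos.2 hQ0
  refine ⟨div_nonneg (sub_nonneg.2 (sqrt_le_one.2 hQ1)) (by positivity), ?_⟩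
  have hk1 : (1 - 3 * s / (2 * R)) / (1 - s / R) ≤ 1 := by
    rw [div_le_one hW, sub_le_sub_iff_left, div_le_div_iff₀ hR0 (by positivity)]
    nlinarith
  have key := one_sub_div_le_of_sq_le (q := √Q) hV hW (div_pos hc hW) hk1 (div_pos hw hr0)
    ((div_lt_one hr0).2 hwr) hq
    (by rw [sq_sqrt hQ0.le, hWQ, hpsq, sub_sub_cancel])
    (by rw [sq_sqrt hQ0.le, hpsq, div_mul_eq_mul_div, div_le_iff₀ hW]; linarith)
  rw [mul_div_cancel₀ _ hW.ne'] at key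
  convert key using 2
  field_simp

/-- Upper bound `∫_R^∞ (du/dr) dr ≤ R + 3 r_s`. -/
lemma schwarzschild_integral_le {s R : ℝ} (hs : 0 < s) (hR : 3 * s ≤ R) :
    ∫ r in Set.Ioi R, (1 - √(1 - (1 - s / r) * (R / √(1 - s / R)) ^ 2 / r ^ 2)) /
        ((1 - s / r) * √(1 - (1 - s / r) * (R / √(1 - s / R)) ^ 2 / r ^ 2)) ≤ R + 3 * s := by
  have hR0 : 0 < R := by linarith
  calc _ ≤ ∫ r in Set.Ioi R, 1 / (1 - 3 * s / (2 * R)) * (r / √(r ^ 2 - R ^ 2) - 1) := by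
        apply MeasureTheory.integral_mono_of_nonneg
        · filter_upwards [MeasureTheory.ae_restrict_mem measurableSet_Ioi] with r hr
          exact (schwarzschild_integrand_bounds hs hR hr).1
        · exact (integrableOn_div_sqrt_sq_sub_sq_sub_one hR0).const_mul _
        · filter_upwards [MeasureTheory.ae_restrict_mem measurableSet_Ioi] with r hr
          exact (schwarzschild_integrand_bounds hs hR hr).2
    _ = 1 / (1 - 3 * s / (2 * R)) * R := by
        rw [MeasureTheory.integral_const_mul, integral_div_sqrt_sq_sub_sq_sub_one hR0]
    _ ≤ R + 3 * s := by
        have hc : 0 < 1 - 3 * s / (2 * R) := by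
          rw [sub_pos, div_lt_one (by positivity)]; linarith
        have hmul : 3 * s / (2 * R) * R = 3 * s / 2 := by field_simp
        have hhalf : 3 * s / (2 * R) ≤ 1 / 2 := by
          rw [div_le_div_iff₀ (by positivity) (by positivity)]; linarith
        rw [one_div_mul_eq_div, div_le_iff₀ hc]
        nlinarith

/-- Penrose's null geodesic endpoint asymptotic for positive-mass Schwarzschild in
3+1 dimensions: the retarded time at the future endpoint of the equatorial null
geodesic with impact parameter `R` symmetric about `t = 0`,
`u_*(R) = -R - r_s log(R/r_s - 1) + ∫_R^∞ (1 - ṙ)/(V ṙ) dr` with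
`V(r) = 1 - r_s/r`, `h(R) = R/√(1 - r_s/R)` and `ṙ = √(1 - V(r) h(R)²/r²)`,
tends to `-∞` as `R → ∞`. -/
theorem schwarzschild_retarded_time_tendsto_atBot (r_s : ℝ) (hrs : 0 < r_s) :
    Filter.Tendsto
      (fun R : ℝ =>
        -R - r_s * Real.log (R / r_s - 1) +
          ∫ r in Set.Ioi R,
            (1 - Real.sqrt (1 - (1 - r_s / r) * (R / Real.sqrt (1 - r_s / R)) ^ 2 / r ^ 2)) /
              ((1 - r_s / r) *
                Real.sqrt (1 - (1 - r_s / r) * (R / Real.sqrt (1 - r_s / R)) ^ 2 / r ^ 2)))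
      Filter.atTop Filter.atBot := by
  have hlog : Filter.Tendsto (fun R : ℝ => Real.log (R / r_s - 1)) Filter.atTop Filter.atTop :=
    Real.tendsto_log_atTop.comp
      (Filter.tendsto_atTop_add_const_right _ (-1) (Filter.tendsto_id.atTop_div_const hrs))
  have hbound : Filter.Tendsto (fun R : ℝ => 3 * r_s + -(r_s * Real.log (R / r_s - 1)))
      Filter.atTop Filter.atBot :=
    Filter.tendsto_atBot_add_const_left _ _
      (Filter.tendsto_neg_atTop_atBot.comp (hlog.const_mul_atTop hrs))
  refine Filter.tendsto_atBot_mono' _ ?_ hbound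
  filter_upwards [Filter.eventually_ge_atTop (3 * r_s)] with R hR
  linarith [schwarzschild_integral_le hrs hR]
end

section
/- Let r_s > 0. Then there exists r₀ > 0 such that for all r ≥ r₀: (r − r_s log(r/r_s + 1))² · (1 + r_s/r) < r². Equivalently, with V(r) = 1 + r_s/r and r_*(r) = r − r_s log(r/r_s + 1), one has r²/(r_*(r)² V(r)) > 1 for all sufficiently large r. -/
/-- Inequality (28): for negative-mass Schwarzschild in 3+1 dimensions, with
`V(r) = 1 + r_s/r` and tortoise coordinate `r_*(r) = r - r_s log(r/r_s + 1)`,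
one has `r_*(r)² V(r) < r²` (i.e. `r²/(r_*² V) > 1`) for all sufficiently large `r`. -/
theorem negative_mass_schwarzschild_compactified_bound (r_s : ℝ) (hrs : 0 < r_s) :
    ∃ r₀ > (0 : ℝ), ∀ r ≥ r₀,
      (r - r_s * Real.log (r / r_s + 1)) ^ 2 * (1 + r_s / r) < r ^ 2 := by
  refine ⟨r_s * Real.exp 1, by positivity, fun r hr => ?_⟩
  have hexp : 1 < Real.exp 1 := Real.one_lt_exp_iff.2 one_pos
  have hlt : r_s < r := by nlinarith
  have hr0 : 0 < r := hrs.trans hlt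
  have hx : Real.exp 1 ≤ r / r_s := by rwa [le_div_iff₀' hrs]
  have hlog_lower : 1 ≤ Real.log (r / r_s + 1) := by
    rw [Real.le_log_iff_exp_le (by positivity)]
    linarith
  have hlog_upper : r_s * Real.log (r / r_s + 1) ≤ r := by
    rw [← le_div_iff₀' hrs]
    linarith [Real.log_le_sub_one_of_pos (show 0 < r / r_s + 1 by positivity)]
  calc (r - r_s * Real.log (r / r_s + 1)) ^ 2 * (1 + r_s / r)
      ≤ (r - r_s) ^ 2 * (1 + r_s / r) := by
        gcongr
        exact le_mul_of_one_le_right hrs.le hlog_lower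
    _ = (r - r_s) * (r ^ 2 - r_s ^ 2) / r := by
        field_simp
        ring
    _ < r ^ 2 := by
        rw [div_lt_iff₀ hr0]
        nlinarith [mul_pos hrs hr0, mul_pos hrs (mul_pos hrs (sub_pos.2 hlt)),
          mul_pos hrs (mul_pos hr0 hr0)]
end

section
/- Let r_s > 0. Then there exists r₀ > r_s such that for all r ≥ r₀: (r + r_s log(r/r_s − 1))² · (1 − r_s/r) > r². Equivalently, with V(r) = 1 − r_s/r and r_*(r) = r + r_s log(r/r_s − 1), one has r²/(r_*(r)² V(r)) < 1 for all sufficiently large r. -/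
/-- Inequality (35): for positive-mass Schwarzschild in 3+1 dimensions, with
`V(r) = 1 - r_s/r` and tortoise coordinate `r_*(r) = r + r_s log(r/r_s - 1)`,
one has `r_*(r)² V(r) > r²` (i.e. `r²/(r_*² V) < 1`) for all sufficiently large `r`. -/
theorem positive_mass_schwarzschild_compactified_bound (r_s : ℝ) (hrs : 0 < r_s) :
    ∃ r₀ > r_s, ∀ r ≥ r₀,
      (r + r_s * Real.log (r / r_s - 1)) ^ 2 * (1 - r_s / r) > r ^ 2 := by
  have he : (1 : ℝ) < Real.exp 1 := Real.one_lt_exp_iff.mpr one_pos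
  refine ⟨(1 + Real.exp 1) * r_s, by nlinarith, fun r hr => ?_⟩
  have h2 : 2 * r_s < r := by nlinarith
  have hr0 : 0 < r := by linarith
  have hexp : Real.exp 1 ≤ r / r_s - 1 := by
    have := (le_div_iff₀ hrs).mpr hr
    linarith
  have hlog : 1 ≤ Real.log (r / r_s - 1) :=
    (Real.le_log_iff_exp_le ((Real.exp_pos 1).trans_le hexp)).mpr hexp
  have hV : 0 ≤ 1 - r_s / r := by
    rw [sub_nonneg, div_le_one hr0]
    linarith
  have hstar : r + r_s ≤ r + r_s * Real.log (r / r_s - 1) := by nlinarith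
  calc r ^ 2 < r ^ 2 + r_s * (r ^ 2 - r * r_s - r_s ^ 2) / r := by
        have : 0 < r ^ 2 - r * r_s - r_s ^ 2 := by nlinarith
        have : 0 < r_s * (r ^ 2 - r * r_s - r_s ^ 2) / r := by positivity
        linarith
    _ = (r + r_s) ^ 2 * (1 - r_s / r) := by
        field_simp
        ring
    _ ≤ (r + r_s * Real.log (r / r_s - 1)) ^ 2 * (1 - r_s / r) := by gcongr
end

section
/- Let n ≥ 2 be an integer, r_s > 0, and V(r) = 1 − r_sⁿ/rⁿ. Suppose g : (r_s, ∞) → ℝ is differentiable with g′(r) = 1/V(r) for all r > r_s and g(r) − r → 0 as r → ∞. Then there exists r₀ > r_s such that g(r)² V(r) < r² for all r ≥ r₀; equivalently r²/(g(r)² V(r)) > 1 for all sufficiently large r. -/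
/-- The blackening factor `1 - r_sⁿ/rⁿ` lies strictly between `0` and `1` outside the horizon. -/
theorem schwarzschild_factor_mem_Ioo {n : ℕ} (hn : n ≠ 0) {r_s r : ℝ} (hrs : 0 < r_s)
    (hr : r_s < r) : 1 - r_s ^ n / r ^ n ∈ Set.Ioo (0 : ℝ) 1 := by
  have hr0 : 0 < r := hrs.trans hr
  have hlt : r_s ^ n / r ^ n < 1 :=
    (div_lt_one (pow_pos hr0 n)).2 (pow_lt_pow_left₀ hr hrs.le hn)
  have hpos : 0 < r_s ^ n / r ^ n := by positivity
  constructor <;> linarith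

/-- A tortoise coordinate normalised by `g r - r → 0` is bounded above by the radius,
since `g r - r` is increasing. -/
theorem tortoise_le_radius {n : ℕ} (hn : n ≠ 0) {r_s : ℝ} (hrs : 0 < r_s) {g : ℝ → ℝ}
    (hg : ∀ r > r_s, HasDerivAt g (1 / (1 - r_s ^ n / r ^ n)) r)
    (hlim : Filter.Tendsto (fun r => g r - r) Filter.atTop (nhds 0)) {r : ℝ} (hr : r_s < r) :
    g r ≤ r := by
  have hd : ∀ x > r_s,
      HasDerivAt (fun r => g r - r) (1 / (1 - r_s ^ n / x ^ n) - 1) x :=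
    fun x hx => (hg x hx).sub (hasDerivAt_id x)
  have hmono : MonotoneOn (fun r => g r - r) (Set.Ioi r_s) := by
    refine monotoneOn_of_deriv_nonneg (convex_Ioi r_s)
      (fun x hx => (hd x hx).continuousAt.continuousWithinAt) ?_ ?_
    · rw [interior_Ioi]
      exact fun x hx => (hd x hx).differentiableAt.differentiableWithinAt
    · rw [interior_Ioi]
      intro x hx
      obtain ⟨h0, h1⟩ := schwarzschild_factor_mem_Ioo hn hrs hx
      rw [(hd x hx).deriv, sub_nonneg]
      exact one_le_one_div h0 h1.le
  refine sub_nonpos.1 (ge_of_tendsto hlim ?_)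
  filter_upwards [Filter.eventually_ge_atTop r] with x hx
  exact hmono hr (hr.trans_le hx) hx

/-- Inequality (30): for positive-mass Schwarzschild in `d+1` dimensions (`d > 3`,
`n = d - 2 ≥ 2`), with `V(r) = 1 - r_sⁿ/rⁿ` and tortoise coordinate `g` normalised
so that `g(r) - r → 0` at infinity, one has `g(r)² V(r) < r²` (i.e.
`r²/(g² V) > 1`) for all sufficiently large `r`. -/
theorem higher_dim_positive_mass_schwarzschild_compactified_bound
    (n : ℕ) (hn : 2 ≤ n) (r_s : ℝ) (hrs : 0 < r_s) (g : ℝ → ℝ)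
    (hg : ∀ r > r_s, HasDerivAt g (1 / (1 - r_s ^ n / r ^ n)) r)
    (hlim : Filter.Tendsto (fun r => g r - r) Filter.atTop (nhds 0)) :
    ∃ r₀ > r_s, ∀ r ≥ r₀, g r ^ 2 * (1 - r_s ^ n / r ^ n) < r ^ 2 := by
  have hn0 : n ≠ 0 := by omega
  obtain ⟨a, ha⟩ := Filter.eventually_atTop.1 (hlim.eventually_const_lt (neg_lt_zero.2 hrs))
  refine ⟨max a (r_s + 1), lt_max_of_lt_right (lt_add_one r_s), fun r hr => ?_⟩
  have hrr : r_s < r := (lt_add_one r_s).trans_le ((le_max_right _ _).trans hr)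
  have hlow : -r_s < g r - r := ha r ((le_max_left _ _).trans hr)
  have hpos : 0 < g r := by linarith
  calc g r ^ 2 * (1 - r_s ^ n / r ^ n)
      < g r ^ 2 :=
        mul_lt_of_lt_one_right (by positivity) (schwarzschild_factor_mem_Ioo hn0 hrs hrr).2
    _ ≤ r ^ 2 := pow_le_pow_left₀ hpos.le (tortoise_le_radius hn0 hrs hg hlim hrr) 2
end

section
/- Let n ≥ 2 be an integer, r_s > 0, and V(r) = 1 + r_sⁿ/rⁿ. Let k ≥ 0, R > 0 with 1 − k² V(R) > 0, and set h² = R²(1 − k² V(R))/V(R). Then for all r ≥ R: V(R)/R² · (1 − k² V(r))/(1 − k² V(R)) − V(r)/r² ≥ (V(R)/R²)·(1 − R²/r²). In particular, 1 − V(r)(k² + h²/r²) ≥ h² (V(R)/R²)(1 − R²/r²) ≥ 0 for r ≥ R. -/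
/-- The radial bound for arbitrary values `A = V(R)` and `B = V(r)` of the potential,
using only `B ≤ A` and `0 < A`. -/
lemma radial_bound_of_le {A B k R r : ℝ} (hR : 0 < R) (hRr : R ≤ r) (hBA : B ≤ A)
    (hA : 0 < A) (hkA : 0 < 1 - k ^ 2 * A) :
    A / R ^ 2 * (1 - R ^ 2 / r ^ 2) ≤
      A / R ^ 2 * ((1 - k ^ 2 * B) / (1 - k ^ 2 * A)) - B / r ^ 2 := by
  have hr : 0 < r := hR.trans_le hRr
  have hratio : 1 ≤ (1 - k ^ 2 * B) / (1 - k ^ 2 * A) := by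
    rw [one_le_div hkA]
    gcongr
  have hfirst : A / R ^ 2 * 1 ≤ A / R ^ 2 * ((1 - k ^ 2 * B) / (1 - k ^ 2 * A)) := by
    gcongr
  have hsecond : B / r ^ 2 ≤ A / r ^ 2 := by gcongr
  have hexpand : A / R ^ 2 * (1 - R ^ 2 / r ^ 2) = A / R ^ 2 * 1 - A / r ^ 2 := by
    field_simp
  linarith

/-- Inequality (32): along an equatorial causal geodesic in negative-mass
Schwarzschild in `d+1` dimensions (`n = d - 2 ≥ 2`, `V(r) = 1 + r_sⁿ/rⁿ`) with
turning point `r = R`, constant `k ≥ 0` and `h² = R²(1 - k²V(R))/V(R)`, one has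
for all `r ≥ R`:
`V(R)/R² · (1 - k²V(r))/(1 - k²V(R)) - V(r)/r² ≥ (V(R)/R²)(1 - R²/r²)`, and hence
`1 - V(r)(k² + h²/r²) ≥ h² (V(R)/R²)(1 - R²/r²) ≥ 0`. -/
theorem negative_mass_schwarzschild_geodesic_bound
    (n : ℕ) (hn : 2 ≤ n) (r_s k R hsq : ℝ) (hrs : 0 < r_s) (hk : 0 ≤ k) (hR : 0 < R)
    (hkR : 0 < 1 - k ^ 2 * (1 + r_s ^ n / R ^ n))
    (hhsq : hsq = R ^ 2 * (1 - k ^ 2 * (1 + r_s ^ n / R ^ n)) / (1 + r_s ^ n / R ^ n)) :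
    ∀ r ≥ R,
      ((1 + r_s ^ n / R ^ n) / R ^ 2 *
          ((1 - k ^ 2 * (1 + r_s ^ n / r ^ n)) / (1 - k ^ 2 * (1 + r_s ^ n / R ^ n)))
          - (1 + r_s ^ n / r ^ n) / r ^ 2
        ≥ (1 + r_s ^ n / R ^ n) / R ^ 2 * (1 - R ^ 2 / r ^ 2)) ∧
      (1 - (1 + r_s ^ n / r ^ n) * (k ^ 2 + hsq / r ^ 2)
        ≥ hsq * ((1 + r_s ^ n / R ^ n) / R ^ 2) * (1 - R ^ 2 / r ^ 2)) ∧
      (hsq * ((1 + r_s ^ n / R ^ n) / R ^ 2) * (1 - R ^ 2 / r ^ 2) ≥ 0) := by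
  intro r hr
  have hr0 : 0 < r := hR.trans_le hr
  have hA : 0 < 1 + r_s ^ n / R ^ n := by positivity
  have hBA : 1 + r_s ^ n / r ^ n ≤ 1 + r_s ^ n / R ^ n := by gcongr
  generalize 1 + r_s ^ n / R ^ n = A at *
  generalize 1 + r_s ^ n / r ^ n = B at *
  have hbound := radial_bound_of_le hR hr hBA hA hkR
  have hsq_pos : 0 < hsq := by rw [hhsq]; positivity
  have hquot : 0 ≤ 1 - R ^ 2 / r ^ 2 := by
    rw [sub_nonneg, div_le_one (by positivity)]
    gcongr
  refine ⟨hbound, ?_, by positivity⟩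
  have hradial : 1 - B * (k ^ 2 + hsq / r ^ 2) =
      hsq * (A / R ^ 2 * ((1 - k ^ 2 * B) / (1 - k ^ 2 * A)) - B / r ^ 2) := by
    have hcancel : hsq * (A / R ^ 2 * ((1 - k ^ 2 * B) / (1 - k ^ 2 * A))) =
        1 - k ^ 2 * B := by
      rw [hhsq]
      field_simp [hkR.ne']
    rw [mul_sub, hcancel]
    ring
  rw [ge_iff_le, hradial, mul_assoc]
  gcongr
end

section
/- Let n ≥ 2 be an integer, r_s > 0, and V(r) = 1 + r_sⁿ/rⁿ. Let k ≥ 0 and R > 0 with 1 − k² V(R) > 0, and set h = R √((1 − k² V(R))/V(R)) > 0. Then for every r > R one has 1 − V(r)(k² + h²/r²) > 0, and 2h ∫_R^∞ dr / (r² √(1 − V(r)(k² + h²/r²))) ≤ π/√(V(R)) < π. -/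
open Real

open Set Filter Topology MeasureTheory in
/-- The angle swept out by a straight line at distance `R` from the origin, from its closest point
to infinity, is a right angle. -/
theorem lintegral_Ioi_straight_line_angle {R : ℝ} (hR : 0 < R) :
    ∫⁻ r in Ioi R, ENNReal.ofReal (R / (r ^ 2 * √(1 - (R / r) ^ 2))) = ENNReal.ofReal (π / 2) := by
  have hcont : ContinuousWithinAt (fun r : ℝ => -arcsin (R / r)) (Ici R) R :=
    ((continuous_arcsin.continuousAt.comp
      (continuousAt_const.div continuousAt_id hR.ne')).neg).continuousWithinAt
  have hderiv : ∀ r ∈ Ioi R, HasDerivAt (fun r : ℝ => -arcsin (R / r))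
      (R / (r ^ 2 * √(1 - (R / r) ^ 2))) r := by
    intro r hr
    have hr0 : 0 < r := hR.trans hr
    have h1 : R / r < 1 := (div_lt_one hr0).2 hr
    have h0 : 0 < R / r := div_pos hR hr0
    have hdiv : HasDerivAt (fun r : ℝ => R / r) (-R / r ^ 2) r := by
      simpa using (hasDerivAt_const r R).fun_div (hasDerivAt_id r) hr0.ne'
    refine ((hasDerivAt_arcsin (by linarith) h1.ne).comp r hdiv).neg.congr_deriv ?_
    rw [neg_div, mul_neg, neg_neg, div_mul_div_comm, one_mul, mul_comm (r ^ 2)]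
  have hnonneg : ∀ r ∈ Ioi R, 0 ≤ R / (r ^ 2 * √(1 - (R / r) ^ 2)) :=
    fun r _ => by positivity
  have hlim : Tendsto (fun r : ℝ => -arcsin (R / r)) atTop (𝓝 0) := by
    simpa using ((continuous_arcsin.tendsto 0).comp (tendsto_id.const_div_atTop R)).neg
  rw [← ofReal_integral_eq_lintegral_ofReal
      (integrableOn_Ioi_deriv_of_nonneg hcont hderiv hnonneg hlim)
      ((ae_restrict_iff' measurableSet_Ioi).2 (ae_of_all _ hnonneg)),
    integral_Ioi_of_hasDerivAt_of_nonneg hcont hderiv hnonneg hlim]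
  simp [hR.ne', arcsin_one]

/-- Comparison of the radial velocity with that of a straight line: with `a = r_sⁿ/Rⁿ` and
`u = R/r`, the radicand dominates `(1 - k²V(R))(1 - u²)`. -/
theorem straight_line_le_radicand {n : ℕ} {a k u : ℝ} (ha : 0 ≤ a)
    (hE : 0 ≤ 1 - k ^ 2 * (1 + a)) (hu0 : 0 ≤ u) (hu1 : u ≤ 1) :
    (1 - k ^ 2 * (1 + a)) * (1 - u ^ 2) ≤
      1 - (1 + a * u ^ n) * (k ^ 2 + (1 - k ^ 2 * (1 + a)) / (1 + a) * u ^ 2) := by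
  have hun : 0 ≤ 1 - u ^ n := sub_nonneg.2 (pow_le_one₀ hu0 hu1)
  have hW : 0 < 1 + a := by linarith
  have key : 1 - (1 + a * u ^ n) * (k ^ 2 + (1 - k ^ 2 * (1 + a)) / (1 + a) * u ^ 2) -
      (1 - k ^ 2 * (1 + a)) * (1 - u ^ 2) =
      k ^ 2 * a * (1 - u ^ n) +
        (1 - k ^ 2 * (1 + a)) * u ^ 2 * (a * (1 - u ^ n) / (1 + a)) := by
    field_simp
    ring
  have : 0 ≤ k ^ 2 * a * (1 - u ^ n) +
      (1 - k ^ 2 * (1 + a)) * u ^ 2 * (a * (1 - u ^ n) / (1 + a)) := by positivity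
  linarith

/-- Inequality (33): along an equatorial causal geodesic in negative-mass
Schwarzschild in `d+1` dimensions (`n = d - 2 ≥ 2`, `V(r) = 1 + r_sⁿ/rⁿ`) with
turning point `r = R`, constant `k ≥ 0` with `1 - k²V(R) > 0` and angular momentum
`h = R√((1 - k²V(R))/V(R)) > 0`, the radicand `1 - V(r)(k² + h²/r²)` is positive for
`r > R`, and the total angular change satisfies
`2h ∫_R^∞ dr/(r² √(1 - V(r)(k² + h²/r²))) ≤ π/√(V(R)) < π`. -/
theorem negative_mass_schwarzschild_angular_change_lt_pi
    (n : ℕ) (hn : 2 ≤ n) (r_s k R h : ℝ) (hrs : 0 < r_s) (hk : 0 ≤ k) (hR : 0 < R)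
    (hkR : 0 < 1 - k ^ 2 * (1 + r_s ^ n / R ^ n))
    (hh : h = R * Real.sqrt ((1 - k ^ 2 * (1 + r_s ^ n / R ^ n)) / (1 + r_s ^ n / R ^ n))) :
    0 < h ∧
    (∀ r > R, 0 < 1 - (1 + r_s ^ n / r ^ n) * (k ^ 2 + h ^ 2 / r ^ 2)) ∧
    ENNReal.ofReal (2 * h) *
        ∫⁻ r in Set.Ioi R,
          ENNReal.ofReal
            (1 / (r ^ 2 * Real.sqrt (1 - (1 + r_s ^ n / r ^ n) * (k ^ 2 + h ^ 2 / r ^ 2)))) ≤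
      ENNReal.ofReal (π / Real.sqrt (1 + r_s ^ n / R ^ n)) ∧
    π / Real.sqrt (1 + r_s ^ n / R ^ n) < π := by
  have ha : 0 < r_s ^ n / R ^ n := by positivity
  have hW : 0 < 1 + r_s ^ n / R ^ n := by linarith
  have hV : ∀ r > R, r_s ^ n / r ^ n = r_s ^ n / R ^ n * (R / r) ^ n := by
    intro r _
    rw [div_pow, div_mul_div_cancel₀ (by positivity)]
  generalize r_s ^ n / R ^ n = a at *
  set E := 1 - k ^ 2 * (1 + a)
  have hh0 : 0 < h := hh ▸ by positivity
  have hhr : ∀ r, h ^ 2 / r ^ 2 = E / (1 + a) * (R / r) ^ 2 := by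
    intro r
    rw [hh, mul_pow, sq_sqrt (by positivity)]
    ring
  have hline : ∀ r > R, 0 < E * (1 - (R / r) ^ 2) := by
    intro r hr
    have hr0 : 0 < r := hR.trans hr
    exact mul_pos hkR (sub_pos.2
      (pow_lt_one₀ (by positivity) ((div_lt_one hr0).2 hr) two_ne_zero))
  have hle : ∀ r > R, E * (1 - (R / r) ^ 2) ≤
      1 - (1 + r_s ^ n / r ^ n) * (k ^ 2 + h ^ 2 / r ^ 2) := by
    intro r hr
    have hr0 : 0 < r := hR.trans hr
    rw [hV r hr, hhr r]
    exact straight_line_le_radicand ha.le hkR.le (by positivity) ((div_le_one hr0).2 hr.le)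
  refine ⟨hh0, fun r hr => (hline r hr).trans_le (hle r hr), ?_, ?_⟩
  · calc
      _ = ∫⁻ r in Set.Ioi R, ENNReal.ofReal (2 * h) * ENNReal.ofReal
            (1 / (r ^ 2 * √(1 - (1 + r_s ^ n / r ^ n) * (k ^ 2 + h ^ 2 / r ^ 2)))) :=
        (MeasureTheory.lintegral_const_mul' _ _ ENNReal.ofReal_ne_top).symm
      _ ≤ ∫⁻ r in Set.Ioi R, ENNReal.ofReal (2 / √(1 + a)) *
            ENNReal.ofReal (R / (r ^ 2 * √(1 - (R / r) ^ 2))) := by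
        refine MeasureTheory.setLIntegral_mono' measurableSet_Ioi fun r hr => ?_
        have hr0 : 0 < r := hR.trans hr
        rw [← ENNReal.ofReal_mul (by positivity), ← ENNReal.ofReal_mul (by positivity)]
        refine ENNReal.ofReal_le_ofReal ?_
        have hpos : 0 < √(E * (1 - (R / r) ^ 2)) := sqrt_pos.2 (hline r hr)
        calc
          _ ≤ 2 * h * (1 / (r ^ 2 * √(E * (1 - (R / r) ^ 2)))) := by
            gcongr
            exact hle r hr
          _ = _ := by
            rw [sqrt_mul hkR.le] at hpos ⊢
            have hu : √(1 - (R / r) ^ 2) ≠ 0 := right_ne_zero_of_mul hpos.ne'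
            have hsE : √E ≠ 0 := left_ne_zero_of_mul hpos.ne'
            rw [hh, sqrt_div hkR.le]
            field_simp
      _ = ENNReal.ofReal (π / √(1 + a)) := by
        rw [MeasureTheory.lintegral_const_mul' _ _ ENNReal.ofReal_ne_top,
          lintegral_Ioi_straight_line_angle hR, ← ENNReal.ofReal_mul (by positivity)]
        congr 1
        ring
  · exact div_lt_self pi_pos (lt_sqrt_of_sq_lt (by linarith))
end

section
/- Let m > 0, a ∈ ℝ, R > 2m. Set α² = 1 + (a²/R²)(1 + 2m/R), Σ(r,θ) = r² + a² cos²θ, Δ(r) = r² − 2mr + a², Λ²(r,θ) = r² + a² + 2m a² r sin²θ / Σ(r,θ), and ω(r,θ) = 2mar / (Σ(r,θ) Λ²(r,θ)). Then for every r ≥ R, every θ ∈ ℝ, and every (τ, ρ, ϑ, ψ) ∈ ℝ⁴: (1 − 2mr/Σ) τ² − (Σ/Δ) ρ² − Σ ϑ² − Λ² sin²θ · ψ² + (4mar sin²θ/Σ) τψ ≥ (1 − 2m/r) τ² − α² ρ²/(1 − 2m/r) − α² r² ϑ² − α² r² sin²θ · (ψ − ω(r,θ) τ)². -/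
open Real

/-- Lemma 7.2: the Kerr line element with mass `m > 0` and rotation parameter `a`
is bounded below, for `r ≥ R > 2m`, by a quasi-Schwarzschild line element, pointwise
on tangent vectors `(τ, ρ, ϑ, ψ)`. Here `Σ = r² + a² cos²θ`, `Δ = r² - 2mr + a²`,
`Λ² = r² + a² + 2ma²r sin²θ/Σ`, `ω = 2mar/(Σ Λ²)` and
`α² = 1 + (a²/R²)(1 + 2m/R)`. -/
theorem kerr_bounded_below_by_quasi_schwarzschild
    (m a R α2 : ℝ) (hm : 0 < m) (hR : 2 * m < R)
    (hα2 : α2 = 1 + a ^ 2 / R ^ 2 * (1 + 2 * m / R)) :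
    ∀ r ≥ R, ∀ θ τ ρ ϑ ψ : ℝ,
      (1 - 2 * m * r / (r ^ 2 + a ^ 2 * cos θ ^ 2)) * τ ^ 2
        - (r ^ 2 + a ^ 2 * cos θ ^ 2) / (r ^ 2 - 2 * m * r + a ^ 2) * ρ ^ 2
        - (r ^ 2 + a ^ 2 * cos θ ^ 2) * ϑ ^ 2
        - (r ^ 2 + a ^ 2 + 2 * m * a ^ 2 * r * sin θ ^ 2 / (r ^ 2 + a ^ 2 * cos θ ^ 2))
            * sin θ ^ 2 * ψ ^ 2
        + 4 * m * a * r * sin θ ^ 2 / (r ^ 2 + a ^ 2 * cos θ ^ 2) * τ * ψ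
      ≥ (1 - 2 * m / r) * τ ^ 2
        - α2 * ρ ^ 2 / (1 - 2 * m / r)
        - α2 * r ^ 2 * ϑ ^ 2
        - α2 * r ^ 2 * sin θ ^ 2 *
            (ψ - 2 * m * a * r /
              ((r ^ 2 + a ^ 2 * cos θ ^ 2) *
                (r ^ 2 + a ^ 2 + 2 * m * a ^ 2 * r * sin θ ^ 2 / (r ^ 2 + a ^ 2 * cos θ ^ 2)))
              * τ) ^ 2 := by
  intro r hr θ τ ρ ϑ ψ
  have hR0 : 0 < R := by linarith
  have hr0 : 0 < r := by linarith
  have hs : 0 ≤ sin θ ^ 2 := sq_nonneg _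
  have hcs : cos θ ^ 2 = 1 - sin θ ^ 2 := by linarith [sin_sq_add_cos_sq θ]
  have hs1 : sin θ ^ 2 ≤ 1 := by linarith [sq_nonneg (cos θ)]
  set s := sin θ ^ 2
  have hSr : r ^ 2 ≤ r ^ 2 + a ^ 2 * cos θ ^ 2 := by
    linarith [mul_nonneg (sq_nonneg a) (sq_nonneg (cos θ))]
  have hSa : r ^ 2 + a ^ 2 * cos θ ^ 2 ≤ r ^ 2 + a ^ 2 := by
    rw [hcs]
    linarith [mul_nonneg (sq_nonneg a) hs]
  set S := r ^ 2 + a ^ 2 * cos θ ^ 2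
  have hr2 : 0 < r ^ 2 := by positivity
  have hS : 0 < S := by linarith
  set L := r ^ 2 + a ^ 2 + 2 * m * a ^ 2 * r * s / S
  have hL : 0 < L := by positivity
  have hf : 0 < 1 - 2 * m / r := by
    rw [sub_pos, div_lt_one hr0]
    linarith
  have hα : r ^ 2 + a ^ 2 * (1 + 2 * m / r) ≤ α2 * r ^ 2 := by
    have h : 1 + a ^ 2 / r ^ 2 * (1 + 2 * m / r) ≤ α2 := by
      rw [hα2]
      gcongr
    calc r ^ 2 + a ^ 2 * (1 + 2 * m / r)
        = (1 + a ^ 2 / r ^ 2 * (1 + 2 * m / r)) * r ^ 2 := by field_simp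
      _ ≤ α2 * r ^ 2 := by gcongr
  have hq : 0 ≤ a ^ 2 * (2 * m / r) := by positivity
  have hSα : S ≤ α2 * r ^ 2 := by linarith
  have hLα : L ≤ α2 * r ^ 2 := by
    have h : 2 * m * a ^ 2 * r * s / S ≤ 2 * m * a ^ 2 * r * 1 / r ^ 2 := by gcongr
    have h' : 2 * m * a ^ 2 * r * 1 / r ^ 2 = a ^ 2 * (2 * m / r) := by field_simp
    linarith
  have hα0 : 0 ≤ α2 := by rw [hα2]; positivity
  have hΔ : r ^ 2 - 2 * m * r + a ^ 2 = r ^ 2 * (1 - 2 * m / r) + a ^ 2 := by field_simp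
  have hradial : S / (r ^ 2 - 2 * m * r + a ^ 2) * ρ ^ 2 ≤ α2 * ρ ^ 2 / (1 - 2 * m / r) := by
    rw [mul_div_right_comm]
    gcongr ?_ * _
    rw [hΔ, div_le_div_iff₀ (by positivity) hf]
    calc S * (1 - 2 * m / r) ≤ α2 * r ^ 2 * (1 - 2 * m / r) := by gcongr
      _ ≤ α2 * (r ^ 2 * (1 - 2 * m / r) + a ^ 2) := by
        linarith [mul_nonneg hα0 (sq_nonneg a)]
  have hpolar : S * ϑ ^ 2 ≤ α2 * r ^ 2 * ϑ ^ 2 := by gcongr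
  set w := 2 * m * a * r / (S * L) with hw_def
  have hazimuthal : L * s * (ψ - w * τ) ^ 2 ≤ α2 * r ^ 2 * s * (ψ - w * τ) ^ 2 := by gcongr
  have htime : 2 * m * r / S * τ ^ 2 ≤ 2 * m / r * τ ^ 2 := by
    have h : 2 * m * r / S ≤ 2 * m * r / r ^ 2 := by gcongr
    have h' : 2 * m * r / r ^ 2 = 2 * m / r := by field_simp
    rw [h'] at h
    gcongr
  have hdrag : 4 * m * a * r * s / S = 2 * (L * s * w) := by
    rw [hw_def]
    field_simp
    ring
  have hshift : 0 ≤ L * s * w ^ 2 * τ ^ 2 := by positivity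
  rw [hdrag]
  linarith
end

section
/- Let m > 0, a ∈ ℝ, R > 2m, and set α² = 1 + (a²/R²)(1 + 2m/R), Σ(r,θ) = r² + a² cos²θ, Δ(r) = r² − 2mr + a², Λ²(r,θ) = r² + a² + 2m a² r sin²θ / Σ(r,θ). Then for all r ≥ R and all θ ∈ ℝ: (i) 1 − 2mr/Σ(r,θ) ≥ 1 − 2m/r; (ii) Σ(r,θ)/Δ(r) ≤ α²/(1 − 2m/r); (iii) Σ(r,θ) ≤ α² r²; (iv) Λ²(r,θ) ≤ α² r². -/
open Real

/-- Component bounds for the Boyer–Lindquist coefficients of the Kerr metric with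
mass `m > 0` and rotation parameter `a`, for `r ≥ R > 2m`, with dilation constant
`α² = 1 + (a²/R²)(1 + 2m/R)`:
(i) `1 - 2mr/Σ ≥ 1 - 2m/r`; (ii) `Σ/Δ ≤ α²/(1 - 2m/r)`; (iii) `Σ ≤ α²r²`;
(iv) `Λ² ≤ α²r²`, where `Σ = r² + a²cos²θ`, `Δ = r² - 2mr + a²`,
`Λ² = r² + a² + 2ma²r sin²θ/Σ`. -/
theorem kerr_coefficient_bounds (m a R α2 : ℝ) (hm : 0 < m) (hR : 2 * m < R)
    (hα2 : α2 = 1 + a ^ 2 / R ^ 2 * (1 + 2 * m / R)) :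
    ∀ r ≥ R, ∀ θ : ℝ,
      (1 - 2 * m / r ≤ 1 - 2 * m * r / (r ^ 2 + a ^ 2 * cos θ ^ 2)) ∧
      ((r ^ 2 + a ^ 2 * cos θ ^ 2) / (r ^ 2 - 2 * m * r + a ^ 2)
        ≤ α2 / (1 - 2 * m / r)) ∧
      (r ^ 2 + a ^ 2 * cos θ ^ 2 ≤ α2 * r ^ 2) ∧
      (r ^ 2 + a ^ 2 + 2 * m * a ^ 2 * r * sin θ ^ 2 / (r ^ 2 + a ^ 2 * cos θ ^ 2)
        ≤ α2 * r ^ 2) := by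
  intro r hr θ
  have hR0 : 0 < R := by linarith
  have hr0 : 0 < r := by linarith
  have hα : r ^ 2 + a ^ 2 + 2 * m * a ^ 2 / r ≤ α2 * r ^ 2 := by
    have hmono : a ^ 2 / r ^ 2 * (1 + 2 * m / r) ≤ a ^ 2 / R ^ 2 * (1 + 2 * m / R) := by
      gcongr
    calc r ^ 2 + a ^ 2 + 2 * m * a ^ 2 / r
        = (1 + a ^ 2 / r ^ 2 * (1 + 2 * m / r)) * r ^ 2 := by field_simp; ring
      _ ≤ α2 * r ^ 2 := by rw [hα2]; gcongr
  have hsigma : r ^ 2 ≤ r ^ 2 + a ^ 2 * cos θ ^ 2 := le_add_of_nonneg_right (by positivity)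
  have hcos : a ^ 2 * cos θ ^ 2 ≤ a ^ 2 :=
    mul_le_of_le_one_right (sq_nonneg a) (cos_sq_le_one θ)
  have hsigma_le : r ^ 2 + a ^ 2 * cos θ ^ 2 ≤ α2 * r ^ 2 := by
    have : 0 ≤ 2 * m * a ^ 2 / r := by positivity
    linarith
  refine ⟨?_, ?_, hsigma_le, ?_⟩
  · have : 2 * m * r / (r ^ 2 + a ^ 2 * cos θ ^ 2) ≤ 2 * m / r := by
      calc 2 * m * r / (r ^ 2 + a ^ 2 * cos θ ^ 2) ≤ 2 * m * r / r ^ 2 := by gcongr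
        _ = 2 * m / r := by field_simp
    linarith
  · have hrm : 0 < r - 2 * m := by linarith
    have hΔ : 0 < r ^ 2 - 2 * m * r := by nlinarith
    have heq : α2 / (1 - 2 * m / r) = α2 * r ^ 2 / (r ^ 2 - 2 * m * r) := by
      have hone : 1 - 2 * m / r = (r ^ 2 - 2 * m * r) / r ^ 2 := by field_simp
      rw [hone, div_div_eq_mul_div]
    rw [heq]
    exact div_le_div₀ (by linarith [sq_nonneg r]) hsigma_le hΔ (by linarith [sq_nonneg a])
  · have : 2 * m * a ^ 2 * r * sin θ ^ 2 / (r ^ 2 + a ^ 2 * cos θ ^ 2)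
        ≤ 2 * m * a ^ 2 / r := by
      calc 2 * m * a ^ 2 * r * sin θ ^ 2 / (r ^ 2 + a ^ 2 * cos θ ^ 2)
          ≤ 2 * m * a ^ 2 * r * 1 / r ^ 2 := by
            gcongr
            exact sin_sq_le_one θ
        _ = 2 * m * a ^ 2 / r := by field_simp
    linarith
end

section
/- Let m > 0 and Q ∈ ℝ, and define V(r) = 1 − 2m/r + Q²/r². Then there exists r₁ > 0 such that V(r) > 0 for all r > r₁, and for every differentiable g : (r₁, ∞) → ℝ with g′(r) = 1/V(r) for all r > r₁, there exists r₂ > r₁ such that g(r)² V(r) > r² for all r ≥ r₂. -/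
/-- The reciprocal of the Reissner–Nordström factor is at least `1 + m / r` for large `r`. -/
lemma one_add_div_le_one_div_reissnerNordstrom {m Q r : ℝ} (hm : 0 < m)
    (hr : 4 * m + Q ^ 2 / m < r) :
    0 < 1 - 2 * m / r + Q ^ 2 / r ^ 2 ∧
      1 + m / r ≤ 1 / (1 - 2 * m / r + Q ^ 2 / r ^ 2) := by
  have hQ : 0 ≤ Q ^ 2 / m := by positivity
  have hr0 : 0 < r := by linarith
  have hmr : 4 * m ^ 2 + Q ^ 2 < m * r := by
    have h := mul_lt_mul_of_pos_left hr hm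
    rwa [mul_add, mul_div_cancel₀ _ hm.ne', show m * (4 * m) = 4 * m ^ 2 by ring] at h
  have hV : 0 < 1 - 2 * m / r + Q ^ 2 / r ^ 2 := by
    have h : 2 * m / r < 1 := by rw [div_lt_one hr0]; linarith
    have : 0 ≤ Q ^ 2 / r ^ 2 := by positivity
    linarith
  refine ⟨hV, ?_⟩
  rw [le_div_iff₀ hV]
  have h : (1 + m / r) * (1 - 2 * m / r + Q ^ 2 / r ^ 2)
      = 1 - (m * r ^ 2 - (Q ^ 2 - 2 * m ^ 2) * r - m * Q ^ 2) / r ^ 3 := by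
    field_simp
    ring
  have hnum : 0 ≤ m * r ^ 2 - (Q ^ 2 - 2 * m ^ 2) * r - m * Q ^ 2 := by
    nlinarith [mul_lt_mul_of_pos_left hmr hr0, mul_lt_mul_of_pos_left hmr hm, pow_pos hm 3,
      mul_nonneg hm.le (sq_nonneg Q)]
  rw [h]
  linarith [div_nonneg hnum (pow_pos hr0 3).le]

/-- A function exceeding `r` by `4 * m` satisfies the compactified bound at `r > 4 * m`. -/
lemma sq_lt_sq_mul_reissnerNordstrom {m Q r y : ℝ} (hm : 0 < m) (hr : 4 * m < r)
    (hy : r + 4 * m ≤ y) :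
    r ^ 2 < y ^ 2 * (1 - 2 * m / r + Q ^ 2 / r ^ 2) := by
  have hr0 : 0 < r := by linarith
  have h1 : 0 < 1 - 2 * m / r := by
    have : 2 * m / r < 1 := by rw [div_lt_one hr0]; linarith
    linarith
  calc r ^ 2 < (r + 4 * m) ^ 2 * (1 - 2 * m / r) := by
        have h : (r + 4 * m) ^ 2 * (1 - 2 * m / r)
            = r ^ 2 + m * (6 * r ^ 2 - 32 * m ^ 2) / r := by
          field_simp
          ring
        have : 0 < m * (6 * r ^ 2 - 32 * m ^ 2) / r := by
          have : 0 < 6 * r ^ 2 - 32 * m ^ 2 := by nlinarith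
          positivity
        linarith
    _ ≤ y ^ 2 * (1 - 2 * m / r + Q ^ 2 / r ^ 2) := by
        have : 0 ≤ Q ^ 2 / r ^ 2 := by positivity
        gcongr
        linarith

/-- Reissner–Nordström analogue of inequality (35): with `m > 0`, `Q ∈ ℝ` and
`V(r) = 1 - 2m/r + Q²/r²`, there is `r₁ > 0` beyond which `V > 0`, and for any
tortoise coordinate `g` (any antiderivative of `1/V` on `(r₁, ∞)`) one has
`g(r)² V(r) > r²` for all sufficiently large `r`. -/
theorem reissner_nordstrom_compactified_bound (m Q : ℝ) (hm : 0 < m) :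
    ∃ r₁ > (0 : ℝ),
      (∀ r > r₁, 0 < 1 - 2 * m / r + Q ^ 2 / r ^ 2) ∧
      ∀ g : ℝ → ℝ,
        (∀ r > r₁, HasDerivAt g (1 / (1 - 2 * m / r + Q ^ 2 / r ^ 2)) r) →
        ∃ r₂ > r₁, ∀ r ≥ r₂, g r ^ 2 * (1 - 2 * m / r + Q ^ 2 / r ^ 2) > r ^ 2 := by
  have hQ : 0 ≤ Q ^ 2 / m := by positivity
  refine ⟨4 * m + Q ^ 2 / m, by positivity,
    fun r hr => (one_add_div_le_one_div_reissnerNordstrom hm hr).1, fun g hg => ?_⟩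
  set r₁ := 4 * m + Q ^ 2 / m with hr₁
  have hr₁pos : 0 < r₁ := by positivity
  have hderiv : ∀ r > r₁, HasDerivAt (fun r => g r - (r + m * Real.log r))
      (1 / (1 - 2 * m / r + Q ^ 2 / r ^ 2) - (1 + m * r⁻¹)) r := fun r hr =>
    (hg r hr).sub ((hasDerivAt_id r).add
      ((Real.hasDerivAt_log (hr₁pos.trans hr).ne').const_mul m))
  have hmono : MonotoneOn (fun r => g r - (r + m * Real.log r)) (Set.Ioi r₁) := by
    refine monotoneOn_of_hasDerivWithinAt_nonneg (convex_Ioi r₁)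
      (fun r hr => (hderiv r hr).continuousAt.continuousWithinAt)
      (fun r hr => (hderiv r (interior_subset hr)).hasDerivWithinAt) fun r hr => ?_
    rw [← div_eq_mul_inv]
    exact sub_nonneg.2 (one_add_div_le_one_div_reissnerNordstrom hm (interior_subset hr)).2
  set c := g (r₁ + 1) - ((r₁ + 1) + m * Real.log (r₁ + 1))
  obtain ⟨R, hR⟩ := Filter.eventually_atTop.1
    ((Real.tendsto_log_atTop.const_mul_atTop hm).eventually_ge_atTop (4 * m - c))
  refine ⟨max R (r₁ + 1), lt_max_of_lt_right (lt_add_one r₁), fun r hr => ?_⟩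
  have hrR : R ≤ r := (le_max_left _ _).trans hr
  have hr1 : r₁ + 1 ≤ r := (le_max_right _ _).trans hr
  have hlog := hR r hrR
  have hle : c ≤ g r - (r + m * Real.log r) :=
    hmono (lt_add_one r₁) ((lt_add_one r₁).trans_le hr1) hr1
  exact sq_lt_sq_mul_reissnerNordstrom hm (by linarith) (by linarith)
end
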